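/- arXiv:1211.2533 — 6 statements merged into one kernel-verified Lean document; each statement's English description precedes it below -/
import Mathlib

section
/- The integral $K_1 = 16\int_{-\pi/12}^{\pi/12} \frac{\cos^2(2\theta)\,\sin^2(\tfrac{\pi}{6}+2\theta)\,\sin^2(\tfrac{\pi}{6}-2\theta)\,\sin^2(\tfrac{\pi}{12})}{\sin^2(\tfrac{\pi}{12}-\theta)}\,d\theta$ equals $16(2-\sqrt{3})\left(\frac{\pi}{64}+\frac{63\sqrt{3}}{1280}\right)$. -/
open Real MeasureTheory

/-!
Since `cos x * sin (π/6 + x) * sin (π/6 - x) = cos (3x) / 4`, the substitution `u = π/12 - θ` turns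
the integrand into `sin² (π/12) / 16` times the Fejér kernel `(sin 6u / sin u)²`, and the interval
into `[0, π/6]`. The kernel is the cosine polynomial `6 + 2 ∑_{0 < k < 6} (6 - k) cos 2ku`, which is
integrated term by term.
-/

lemma cos_mul_sin_pi_div_six_add_mul_sin_pi_div_six_sub (x : ℝ) :
    cos x * sin (π / 6 + x) * sin (π / 6 - x) = cos (3 * x) / 4 := by
  have h3 : √3 ^ 2 = 3 := sq_sqrt (by norm_num)
  rw [sin_add, sin_sub, sin_pi_div_six, cos_pi_div_six, cos_three_mul]
  linear_combination (-(cos x * sin x ^ 2) / 4) * h3 - (3 / 4) * cos x * sin_sq_add_cos_sq x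

lemma sin_sq_pi_div_twelve : sin (π / 12) ^ 2 = (2 - √3) / 4 := by
  rw [sin_sq_eq_half_sub, show 2 * (π / 12) = π / 6 by ring, cos_pi_div_six]
  ring

lemma sin_add_sq_sub_sin_sq (x y : ℝ) :
    sin (x + y) ^ 2 - sin x ^ 2 = sin y * sin (2 * x + y) := by
  rw [sin_add, sin_add, sin_two_mul, cos_two_mul']
  linear_combination sin x ^ 2 * sin_sq_add_cos_sq y

lemma sin_mul_one_add_two_mul_sum_cos (n : ℕ) (x : ℝ) :
    sin x * (1 + 2 * ∑ k ∈ Finset.Ico 1 (n + 1), cos (2 * k * x)) = sin ((2 * n + 1) * x) := by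
  induction n with
  | zero => simp
  | succ n ih =>
    have hstep := two_mul_sin_mul_cos x (2 * (n + 1 : ℕ) * x)
    rw [show x - 2 * (n + 1 : ℕ) * x = -((2 * n + 1) * x) by push_cast; ring,
      show x + 2 * (n + 1 : ℕ) * x = (2 * (n + 1 : ℕ) + 1) * x by ring, sin_neg] at hstep
    rw [Finset.sum_Ico_succ_top (by lia)]
    linear_combination ih + hstep

lemma sin_sq_mul_add_two_mul_sum_cos (n : ℕ) (x : ℝ) :
    sin x ^ 2 * (n + 2 * ∑ k ∈ Finset.Ico 1 n, ((n : ℝ) - k) * cos (2 * k * x))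
      = sin (n * x) ^ 2 := by
  induction n with
  | zero => simp
  | succ n ih =>
    -- Consecutive Fejér kernels differ by the Dirichlet kernel `1 + 2 ∑_{0 < k ≤ n} cos 2kx`.
    have hsum : ∑ k ∈ Finset.Ico 1 (n + 1), (((n + 1 : ℕ) : ℝ) - k) * cos (2 * k * x)
        = ∑ k ∈ Finset.Ico 1 n, ((n : ℝ) - k) * cos (2 * k * x)
          + ∑ k ∈ Finset.Ico 1 (n + 1), cos (2 * k * x) := by
      have htop : ∑ k ∈ Finset.Ico 1 (n + 1), ((n : ℝ) - k) * cos (2 * k * x)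
          = ∑ k ∈ Finset.Ico 1 n, ((n : ℝ) - k) * cos (2 * k * x) := by
        cases n with
        | zero => simp
        | succ n => simp [Finset.sum_Ico_succ_top]
      rw [← htop, ← Finset.sum_add_distrib]
      exact Finset.sum_congr rfl fun k _ => by push_cast; ring
    have hdiff := sin_add_sq_sub_sin_sq (n * x) x
    rw [show n * x + x = (n + 1 : ℕ) * x by push_cast; ring,
      show 2 * (n * x) + x = (2 * n + 1) * x by ring] at hdiff
    rw [hsum]
    push_cast at hdiff ⊢
    linear_combination ih - hdiff + sin x * sin_mul_one_add_two_mul_sum_cos n x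

lemma ae_sin_ne_zero : ∀ᵐ x : ℝ, sin x ≠ 0 := by
  have hzeros : {x : ℝ | sin x = 0} = Set.range fun n : ℤ => (n : ℝ) * π :=
    Set.ext fun _ => sin_eq_zero_iff
  have hcountable : {x : ℝ | sin x = 0}.Countable := hzeros ▸ Set.countable_range _
  exact hcountable.ae_notMem volume

lemma integral_cos_mul {c : ℝ} (hc : c ≠ 0) (a b : ℝ) :
    ∫ x in a..b, cos (c * x) = (sin (c * b) - sin (c * a)) / c := by
  rw [intervalIntegral.integral_comp_mul_left cos hc, integral_cos, smul_eq_mul, inv_mul_eq_div]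

lemma integral_sin_nat_mul_div_sin_sq (n : ℕ) (a b : ℝ) :
    ∫ x in a..b, (sin (n * x) / sin x) ^ 2
      = n * (b - a)
        + ∑ k ∈ Finset.Ico 1 n, ((n : ℝ) - k) / k * (sin (2 * k * b) - sin (2 * k * a)) := by
  have hkernel : ∀ᵐ x : ℝ, (sin (n * x) / sin x) ^ 2
      = n + ∑ k ∈ Finset.Ico 1 n, 2 * ((n : ℝ) - k) * cos (2 * k * x) := by
    filter_upwards [ae_sin_ne_zero] with x hx
    rw [div_pow, ← sin_sq_mul_add_two_mul_sum_cos, mul_div_cancel_left₀ _ (pow_ne_zero 2 hx),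
      Finset.mul_sum]
    simp only [mul_assoc]
  have hterm (k : ℕ) (hk : k ∈ Finset.Ico 1 n) :
      ∫ x in a..b, 2 * ((n : ℝ) - k) * cos (2 * k * x)
        = ((n : ℝ) - k) / k * (sin (2 * k * b) - sin (2 * k * a)) := by
    have hk0 : (k : ℝ) ≠ 0 := Nat.cast_ne_zero.mpr (by grind)
    rw [intervalIntegral.integral_const_mul, integral_cos_mul (mul_ne_zero two_ne_zero hk0)]
    field_simp
  rw [intervalIntegral.integral_congr_ae (hkernel.mono fun _ h _ => h),
    intervalIntegral.integral_add (Continuous.intervalIntegrable (by fun_prop) _ _)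
      (Continuous.intervalIntegrable (by fun_prop) _ _),
    intervalIntegral.integral_const, smul_eq_mul, mul_comm (b - a),
    intervalIntegral.integral_finsetSum
      fun k _ => Continuous.intervalIntegrable (by fun_prop) _ _,
    Finset.sum_congr rfl hterm]

lemma integral_sin_six_mul_div_sin_sq :
    ∫ x in (0 : ℝ)..(π / 6), (sin (6 * x) / sin x) ^ 2 = π + 63 * √3 / 20 := by
  have h₁ : sin (2 * 1 * (π / 6)) = √3 / 2 := by
    rw [← sin_pi_div_three]; ring_nf
  have h₂ : sin (2 * 2 * (π / 6)) = √3 / 2 := by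
    rw [← sin_pi_div_three, ← sin_pi_sub]; ring_nf
  have h₃ : sin (2 * 3 * (π / 6)) = 0 := by
    rw [← sin_pi]; ring_nf
  have h₄ : sin (2 * 4 * (π / 6)) = -(√3 / 2) := by
    rw [← sin_pi_div_three, ← sin_add_pi]; ring_nf
  have h₅ : sin (2 * 5 * (π / 6)) = -(√3 / 2) := by
    rw [← sin_pi_div_three, ← sin_two_pi_sub]; ring_nf
  have hfejer := integral_sin_nat_mul_div_sin_sq 6 0 (π / 6)
  simp only [Finset.sum_Ico_succ_top, Nat.reduceLeDiff, Finset.Ico_self, Finset.sum_empty,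
    Nat.cast_ofNat, Nat.cast_one, h₁, h₂, h₃, h₄, h₅, mul_zero, sin_zero] at hfejer
  rw [hfejer]
  ring

lemma tube_integrand_eq_fejer_kernel (θ : ℝ) :
    cos (2 * θ) ^ 2 * sin (π / 6 + 2 * θ) ^ 2 * sin (π / 6 - 2 * θ) ^ 2 * sin (π / 12) ^ 2
        / sin (π / 12 - θ) ^ 2
      = sin (π / 12) ^ 2 / 16 * (sin (6 * (π / 12 - θ)) / sin (π / 12 - θ)) ^ 2 := by
  have hweight : cos (2 * θ) * sin (π / 6 + 2 * θ) * sin (π / 6 - 2 * θ)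
      = sin (6 * (π / 12 - θ)) / 4 := by
    rw [cos_mul_sin_pi_div_six_add_mul_sin_pi_div_six_sub, ← sin_pi_div_two_sub]
    ring_nf
  rw [← mul_pow, ← mul_pow, hweight]
  ring

/-- `K₁ = 16 ∫_{-π/12}^{π/12} cos²(2θ) sin²(π/6+2θ) sin²(π/6-2θ) sin²(π/12)/sin²(π/12-θ) dθ
    = 16(2-√3)(π/64 + 63√3/1280)`. -/
theorem stmt1 :
    (16 : ℝ) * (∫ θ in (-(π/12))..(π/12),
      (cos (2*θ))^2 * (sin (π/6 + 2*θ))^2 * (sin (π/6 - 2*θ))^2 * (sin (π/12))^2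
        / (sin (π/12 - θ))^2)
    = 16 * (2 - Real.sqrt 3) * (π/64 + 63 * Real.sqrt 3 / 1280) := by
  have hsubst : ∫ θ in (-(π / 12))..(π / 12), (sin (6 * (π / 12 - θ)) / sin (π / 12 - θ)) ^ 2
      = ∫ u in (0 : ℝ)..(π / 6), (sin (6 * u) / sin u) ^ 2 := by
    rw [intervalIntegral.integral_comp_sub_left (fun u => (sin (6 * u) / sin u) ^ 2)]
    ring_nf
  simp only [tube_integrand_eq_fejer_kernel]
  rw [intervalIntegral.integral_const_mul, hsubst, integral_sin_six_mul_div_sin_sq,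
    sin_sq_pi_div_twelve]
  ring
end

section
/- Let $I_2$ be the $2\times 2$ identity matrix and $J = \begin{pmatrix}0&-1\\1&0\end{pmatrix}$. Define $10\times 10$ real matrices in $2\times 2$ blocks $(B_{pq})_{p,q=1}^{5}$: $A_\xi$ is block-diagonal with diagonal blocks $\sqrt{3}I_2,\ \frac{1}{\sqrt{3}}I_2,\ 0,\ -\frac{1}{\sqrt{3}}I_2,\ -\sqrt{3}I_2$; $A_{\bar\zeta}$ has $B_{12}=B_{21}=-I_2$, $B_{24}=B_{42}=\frac{2}{\sqrt{3}}I_2$, $B_{45}=B_{54}=-I_2$ and all other blocks zero; $A_{\zeta}$ has $B_{12}=J$, $B_{21}=-J$, $B_{24}=-\frac{2}{\sqrt{3}}J$, $B_{42}=\frac{2}{\sqrt{3}}J$, $B_{45}=J$, $B_{54}=-J$ and all other blocks zero. Then for all real $t,s$, the matrix $A(t,s) = \cos t\, A_\xi + \sin t\cos s\, A_{\bar\zeta} + \sin t\sin s\, A_{\zeta}$ has characteristic polynomial $\det(xI_{10}-A(t,s)) = x^2(x^2-3)^2\big(x^2-\tfrac{1}{3}\big)^2$; in particular its eigenvalues are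 $\sqrt{3}, \frac{1}{\sqrt{3}}, 0, -\frac{1}{\sqrt{3}}, -\sqrt{3}$, each with multiplicity $2$. -/
/-!
The blocks `I` and `J` are the matrices of multiplication by `1` and `i` on `ℂ = ℝ²`, so a linear
combination `A = a A_ξ + b A_ζ̄ + c A_ζ` is the realification of a complex Hermitian `5 × 5` matrix,
and `det (x - A)` is the squared modulus of a complex `5 × 5` determinant. In the latter the third
coordinate splits off and leaves a tridiagonal `4 × 4` matrix, whose off-diagonal entries are real
multiples of `b ∓ ic` and enter the determinant only through the products of transposed pairs,
which are multiples of `b² + c²`. (Up to signs of basis vectors and the factor `2 / √3`, the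
tridiagonal matrix is the component of spin in the direction `(a, b, c)` for spin `3/2`, which
explains the eigenvalues `±√3, ±1/√3` for a unit vector.)
-/

open Real Matrix

/-- Assemble a `5 × 5` array of `2 × 2` blocks into a `10 × 10` matrix. -/
def ofBlocks (M : Matrix (Fin 5) (Fin 5) (Matrix (Fin 2) (Fin 2) ℝ)) :
    Matrix (Fin 10) (Fin 10) ℝ := fun i j =>
  M ⟨i.val / 2, by have := i.isLt; omega⟩ ⟨j.val / 2, by have := j.isLt; omega⟩
    ⟨i.val % 2, by omega⟩ ⟨j.val % 2, by omega⟩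

/-- `J = [[0,-1],[1,0]]`. -/
def Jmat : Matrix (Fin 2) (Fin 2) ℝ := !![0, -1; 1, 0]

/-- The shape operator `A_ξ`: block diagonal with blocks `√3 I, (1/√3) I, 0, -(1/√3) I, -√3 I`. -/
noncomputable def Axi : Matrix (Fin 10) (Fin 10) ℝ :=
  ofBlocks !![Real.sqrt 3 • 1, 0, 0, 0, 0;
              0, (1 / Real.sqrt 3) • 1, 0, 0, 0;
              0, 0, 0, 0, 0;
              0, 0, 0, (-(1 / Real.sqrt 3)) • 1, 0;
              0, 0, 0, 0, (-Real.sqrt 3) • 1]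

/-- The shape operator `A_ζ̄`: `B₁₂ = B₂₁ = -I`, `B₂₄ = B₄₂ = (2/√3) I`, `B₄₅ = B₅₄ = -I`,
other blocks zero. -/
noncomputable def Azetabar : Matrix (Fin 10) (Fin 10) ℝ :=
  ofBlocks !![0, -1, 0, 0, 0;
              -1, 0, 0, (2 / Real.sqrt 3) • 1, 0;
              0, 0, 0, 0, 0;
              0, (2 / Real.sqrt 3) • 1, 0, 0, -1;
              0, 0, 0, -1, 0]

/-- The shape operator `A_ζ`: `B₁₂ = Jmat`, `B₂₁ = -Jmat`, `B₂₄ = -(2/√3) Jmat`, `B₄₂ = (2/√3) Jmat`,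
`B₄₅ = Jmat`, `B₅₄ = -Jmat`, other blocks zero. -/
noncomputable def Azeta : Matrix (Fin 10) (Fin 10) ℝ :=
  ofBlocks !![0, Jmat, 0, 0, 0;
              -Jmat, 0, 0, (-(2 / Real.sqrt 3)) • Jmat, 0;
              0, 0, 0, 0, 0;
              0, (2 / Real.sqrt 3) • Jmat, 0, 0, Jmat;
              0, 0, 0, -Jmat, 0]

section RestrictScalars

variable {R S ι n : Type*} [CommRing R] [CommRing S] [Algebra R S]
  [Fintype ι] [DecidableEq ι] [Fintype n] [DecidableEq n]

/-- Restriction of scalars for square matrices: the matrix of an `S`-linear endomorphism of `n → S`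
is sent to its matrix as an `R`-linear endomorphism, with respect to the `R`-basis of `n → S`
formed by the copies of `b` in each coordinate. -/
noncomputable def matrixRestrictScalars (b : Module.Basis ι R S) :
    Matrix n n S →ₐ[R] Matrix (n × ι) (n × ι) R :=
  (Matrix.compAlgEquiv n ι R R).toAlgHom.comp (Algebra.leftMulMatrix b).mapMatrix

theorem det_matrixRestrictScalars (b : Module.Basis ι R S) (M : Matrix n n S) :
    (matrixRestrictScalars b M).det = Algebra.norm R M.det := by
  rw [Algebra.norm_eq_matrix_det b]
  exact (Matrix.det_det (M := M) (Algebra.leftMulMatrix b).toRingHom).symm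

end RestrictScalars

section Determinants

variable {R : Type*} [CommRing R]

theorem det_eq_mul_det_submatrix_of_row_eq_zero {n : ℕ} (A : Matrix (Fin (n + 1)) (Fin (n + 1)) R)
    (i : Fin (n + 1)) (h : ∀ j, j ≠ i → A i j = 0) :
    A.det = A i i * (A.submatrix i.succAbove i.succAbove).det := by
  rw [Matrix.det_succ_row A i, Finset.sum_eq_single_of_mem i (Finset.mem_univ i)
    fun j _ hj => by rw [h j hj, mul_zero, zero_mul], Even.neg_one_pow ⟨i, rfl⟩, one_mul]

theorem det_tridiagonal_fin_four (a₁ a₂ a₃ a₄ b₁ b₂ b₃ c₁ c₂ c₃ : R) :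
    Matrix.det !![a₁, b₁, 0, 0; c₁, a₂, b₂, 0; 0, c₂, a₃, b₃; 0, 0, c₃, a₄] =
      a₁ * a₂ * a₃ * a₄ - b₁ * c₁ * (a₃ * a₄) - b₂ * c₂ * (a₁ * a₄) - b₃ * c₃ * (a₁ * a₂)
        + b₁ * c₁ * (b₃ * c₃) := by
  simp [Matrix.det_succ_row_zero, Fin.sum_univ_succ, Fin.succAbove]
  ring

theorem det_spin_three_halves {r s : R} (hrs : r * s = 1) (hr : r ^ 2 = 3) (x a u v : R) :
    Matrix.det !![x - r * a, u, 0, 0;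
                  v, x - s * a, -(2 * s) * u, 0;
                  0, -(2 * s) * v, x + s * a, u;
                  0, 0, v, x + r * a] =
      (x ^ 2 - r ^ 2 * (a ^ 2 + u * v)) * (x ^ 2 - s ^ 2 * (a ^ 2 + u * v)) := by
  have hs : 3 * s ^ 2 = 1 := by rw [← hr, ← mul_pow, hrs, one_pow]
  have adjacent : (x + s * a) * (x + r * a) + (x - r * a) * (x - s * a) = 2 * (x ^ 2 + a ^ 2) := by
    linear_combination 2 * a ^ 2 * hrs
  calc
    _ = (x ^ 2 - r ^ 2 * a ^ 2) * (x ^ 2 - s ^ 2 * a ^ 2)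
          - u * v * ((x + s * a) * (x + r * a) + (x - r * a) * (x - s * a))
          - 4 * s ^ 2 * (u * v) * (x ^ 2 - r ^ 2 * a ^ 2) + (u * v) ^ 2 := by
      rw [det_tridiagonal_fin_four]
      ring
    _ = (x ^ 2 - 3 * a ^ 2) * (x ^ 2 - s ^ 2 * a ^ 2) - u * v * (2 * (x ^ 2 + a ^ 2))
          - 4 * s ^ 2 * (u * v) * (x ^ 2 - 3 * a ^ 2) + (u * v) ^ 2 := by
      rw [adjacent, hr]
    _ = (x ^ 2 - 3 * (a ^ 2 + u * v)) * (x ^ 2 - s ^ 2 * (a ^ 2 + u * v)) := by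
      linear_combination (2 * a ^ 2 * (u * v) - x ^ 2 * (u * v) - (u * v) ^ 2) * hs
    _ = _ := by rw [hr]

end Determinants

/-- The realification of a complex `5 × 5` matrix: the entry `u + iv` becomes the block
`u I + v J`. -/
noncomputable def realify : Matrix (Fin 5) (Fin 5) ℂ →ₐ[ℝ] Matrix (Fin 10) (Fin 10) ℝ :=
  (Matrix.reindexAlgEquiv ℝ ℝ (finProdFinEquiv : Fin 5 × Fin 2 ≃ Fin 10)).toAlgHom.comp
    (matrixRestrictScalars Complex.basisOneI)

theorem realify_apply (M : Matrix (Fin 5) (Fin 5) ℂ) :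
    realify M = ofBlocks (M.map (Algebra.leftMulMatrix Complex.basisOneI)) :=
  rfl

theorem det_realify (M : Matrix (Fin 5) (Fin 5) ℂ) :
    (realify M).det = Complex.normSq M.det := by
  rw [← Algebra.norm_complex_apply, ← det_matrixRestrictScalars Complex.basisOneI M]
  exact Matrix.det_submatrix_equiv_self (finProdFinEquiv : Fin 5 × Fin 2 ≃ Fin 10).symm
    (matrixRestrictScalars Complex.basisOneI M)

theorem leftMulMatrix_basisOneI_eq (z : ℂ) :
    Algebra.leftMulMatrix Complex.basisOneI z = z.re • 1 + z.im • Jmat := by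
  rw [Algebra.leftMulMatrix_complex]
  ext i j
  fin_cases i <;> fin_cases j <;> simp [Jmat]

/-- The complex matrix whose realification is `Axi`. -/
noncomputable def complexAxi : Matrix (Fin 5) (Fin 5) ℂ :=
  !![(√3 : ℂ), 0, 0, 0, 0;
     0, 1 / √3, 0, 0, 0;
     0, 0, 0, 0, 0;
     0, 0, 0, -(1 / √3), 0;
     0, 0, 0, 0, -√3]

/-- The complex matrix whose realification is `Azetabar`. -/
noncomputable def complexAzetabar : Matrix (Fin 5) (Fin 5) ℂ :=
  !![0, -1, 0, 0, 0;
     -1, 0, 0, 2 / √3, 0;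
     0, 0, 0, 0, 0;
     0, 2 / √3, 0, 0, -1;
     0, 0, 0, -1, 0]

/-- The complex matrix whose realification is `Azeta`; the block `Jmat` corresponds to `i`. -/
noncomputable def complexAzeta : Matrix (Fin 5) (Fin 5) ℂ :=
  !![0, Complex.I, 0, 0, 0;
     -Complex.I, 0, 0, -(2 / √3) * Complex.I, 0;
     0, 0, 0, 0, 0;
     0, 2 / √3 * Complex.I, 0, 0, Complex.I;
     0, 0, 0, -Complex.I, 0]

theorem realify_complexAxi : realify complexAxi = Axi := by
  rw [realify_apply, Axi]
  congr 1
  ext1 i j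
  -- `simp` would compute the real part of `(√3)⁻¹`, but not of `1 / √3`, as `√3 / 3`.
  fin_cases i <;> fin_cases j <;>
    simp [complexAxi, leftMulMatrix_basisOneI_eq, Algebra.algebraMap_eq_smul_one, -one_div]

theorem realify_complexAzetabar : realify complexAzetabar = Azetabar := by
  rw [realify_apply, Azetabar]
  congr 1
  ext1 i j
  fin_cases i <;> fin_cases j <;> simp [complexAzetabar, leftMulMatrix_basisOneI_eq]

theorem realify_complexAzeta : realify complexAzeta = Azeta := by
  rw [realify_apply, Azeta]
  congr 1
  ext1 i j
  fin_cases i <;> fin_cases j <;> simp [complexAzeta, leftMulMatrix_basisOneI_eq]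

/-- The complex matrix whose realification is `x - A`, where `A` is the combination
`a A_ξ + b A_ζ̄ + c A_ζ` of the shape operators. -/
noncomputable def complexCharmatrix (a b c x : ℝ) : Matrix (Fin 5) (Fin 5) ℂ :=
  x • 1 - (a • complexAxi + b • complexAzetabar + c • complexAzeta)

theorem realify_complexCharmatrix (a b c x : ℝ) :
    realify (complexCharmatrix a b c x) =
      x • (1 : Matrix (Fin 10) (Fin 10) ℝ) - (a • Axi + b • Azetabar + c • Azeta) := by
  simp only [complexCharmatrix, map_sub, map_add, map_smul, map_one, realify_complexAxi,
    realify_complexAzetabar, realify_complexAzeta]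

theorem complexCharmatrix_eq (a b c x : ℝ) :
    complexCharmatrix a b c x =
      !![(x - √3 * a : ℂ), b - c * Complex.I, 0, 0, 0;
         b + c * Complex.I, x - 1 / √3 * a, 0, -(2 * (1 / √3)) * (b - c * Complex.I), 0;
         0, 0, x, 0, 0;
         0, -(2 * (1 / √3)) * (b + c * Complex.I), 0, x + 1 / √3 * a, b - c * Complex.I;
         0, 0, 0, b + c * Complex.I, x + √3 * a] := by
  ext i j
  fin_cases i <;> fin_cases j <;>
    simp [complexCharmatrix, complexAxi, complexAzetabar, complexAzeta] <;> ring

theorem complexCharmatrix_submatrix_succAbove_two (a b c x : ℝ) :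
    (complexCharmatrix a b c x).submatrix (Fin.succAbove 2) (Fin.succAbove 2) =
      !![(x - √3 * a : ℂ), b - c * Complex.I, 0, 0;
         b + c * Complex.I, x - 1 / √3 * a, -(2 * (1 / √3)) * (b - c * Complex.I), 0;
         0, -(2 * (1 / √3)) * (b + c * Complex.I), x + 1 / √3 * a, b - c * Complex.I;
         0, 0, b + c * Complex.I, x + √3 * a] := by
  rw [complexCharmatrix_eq]
  ext i j
  fin_cases i <;> fin_cases j <;> rfl

theorem det_complexCharmatrix (a b c x : ℝ) :
    (complexCharmatrix a b c x).det =
      (x * (x ^ 2 - 3 * (a ^ 2 + b ^ 2 + c ^ 2)) * (x ^ 2 - (a ^ 2 + b ^ 2 + c ^ 2) / 3) : ℝ) := by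
  have row_two (j : Fin 5) (hj : j ≠ 2) : complexCharmatrix a b c x 2 j = 0 := by
    rw [complexCharmatrix_eq]
    fin_cases j <;> first | rfl | exact absurd rfl hj
  have entry_two_two : complexCharmatrix a b c x 2 2 = x := by
    rw [complexCharmatrix_eq]
    rfl
  have sqrt_sq : (√3 : ℂ) ^ 2 = 3 := by
    rw [← Complex.ofReal_pow, Real.sq_sqrt zero_le_three, Complex.ofReal_ofNat]
  have sqrt_ne_zero : (√3 : ℂ) ≠ 0 := by simp
  have norm_sq : (b - c * Complex.I) * (b + c * Complex.I) = (b ^ 2 + c ^ 2 : ℂ) := by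
    linear_combination -(c : ℂ) ^ 2 * Complex.I_sq
  rw [det_eq_mul_det_submatrix_of_row_eq_zero _ 2 row_two, entry_two_two,
    complexCharmatrix_submatrix_succAbove_two,
    det_spin_three_halves (mul_one_div_cancel sqrt_ne_zero) sqrt_sq, norm_sq, div_pow, sqrt_sq]
  push_cast
  ring

theorem stmt10_general (a b c x : ℝ) :
    Matrix.det (x • (1 : Matrix (Fin 10) (Fin 10) ℝ) - (a • Axi + b • Azetabar + c • Azeta)) =
      x ^ 2 * (x ^ 2 - 3 * (a ^ 2 + b ^ 2 + c ^ 2)) ^ 2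
        * (x ^ 2 - (a ^ 2 + b ^ 2 + c ^ 2) / 3) ^ 2 := by
  rw [← realify_complexCharmatrix, det_realify, det_complexCharmatrix, Complex.normSq_ofReal]
  ring

/-- The shape operator `A(t,s) = cos t · A_ξ + sin t cos s · A_ζ̄ + sin t sin s · A_ζ` of the focal
submanifold `M₂` (`g = 6`, `(m₁,m₂) = (2,2)`) has characteristic polynomial
`x²(x²-3)²(x²-1/3)²`; in particular its eigenvalues are `√3, 1/√3, 0, -1/√3, -√3`, each with
multiplicity `2`, independently of `(t,s)`. -/
theorem stmt10 (t s x : ℝ) :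
    Matrix.det (x • (1 : Matrix (Fin 10) (Fin 10) ℝ)
        - (Real.cos t • Axi + (Real.sin t * Real.cos s) • Azetabar
            + (Real.sin t * Real.sin s) • Azeta))
      = x^2 * (x^2 - 3)^2 * (x^2 - 1/3)^2 := by
  have sum_sq : cos t ^ 2 + (sin t * cos s) ^ 2 + (sin t * sin s) ^ 2 = 1 := by
    linear_combination sin t ^ 2 * sin_sq_add_cos_sq s + sin_sq_add_cos_sq t
  rw [stmt10_general, sum_sq, mul_one]
end

section
/- Let $A(t,s)$ be the $10\times 10$ matrix defined in blocks by $B_{11} = \sqrt{3}\cos t\, I_2$, $B_{15} = \sqrt{3}\sin t\, R(\tfrac{\pi}{2}-s)$, $B_{51} = \sqrt{3}\sin t\, R(s-\tfrac{\pi}{2})$, $B_{55} = -\sqrt{3}\cos t\, I_2$, $B_{22} = \frac{1}{\sqrt{3}}\cos t\, I_2$, $B_{24} = \frac{1}{\sqrt{3}}\sin t\, R(\tfrac{\pi}{2}-s)$, $B_{42} = \frac{1}{\sqrt{3}}\sin t\, R(s-\tfrac{\pi}{2})$, $B_{44} = -\frac{1}{\sqrt{3}}\cos t\, I_2$, other blocks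 zero, where $R(\phi)=\cos\phi\,I_2+\sin\phi\,J$, $J=\begin{pmatrix}0&-1\\1&0\end{pmatrix}$. Denote the standard basis of $\mathbb{R}^{10}$ by $e_1,e_{\bar1},e_2,e_{\bar2},\dots,e_5,e_{\bar5}$ (two vectors per block). For $0<t<\pi$ and $s\in\mathbb{R}$, the vectors $\varepsilon_1 = \frac{\sin t\sin s}{\sqrt{2(1-\cos t)}}e_1+\frac{\sin t\cos s}{\sqrt{2(1-\cos t)}}e_{\bar1}+\sqrt{\frac{1-\cos t}{2}}e_5$ and $\varepsilon_{\bar1} = -\frac{\sin t\cos s}{\sqrt{2(1-\cos t)}}e_1+\frac{\sin t\sin s}{\sqrt{2(1-\cos t)}}e_{\bar1}+\sqrt{\frac{1-\cos t}{2}}e_{\bar5}$ are orthonormal and satisfy $A(t,s)\varepsilon_1 = \sqrt{3}\,\varepsilon_1$ and $A(t,s)\varepsilon_{\bar1} = \sqrt{3}\,\varepsilon_{\bar1}$. -/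
/-!
On the first and the last block, `A(t, s)` is `√3` times the reflection
`[[cos t, sin t], [sin t, -cos t]]`, with its off-diagonal entries twisted by the rotation
`R(π/2 - s)` and its inverse `R(s - π/2)`. The reflection fixes the half-angle vector
`(cos θ, sin θ)`, `t = 2θ`, so `v ↦ (cos θ R(π/2 - s) v, sin θ v)` embeds `ℝ²` isometrically into
the eigenspace for `√3`. The vectors `ε₁` and `ε₁̄` are the images of the standard basis, because
`√(2(1 - cos t)) = 2 sin θ` and `√((1 - cos t)/2) = sin θ` once `θ` is chosen with `sin θ > 0`.
-/

open Real Matrix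

/-- The rotation `R(φ) = cos φ · I₂ + sin φ · J`. -/
noncomputable def R (φ : ℝ) : Matrix (Fin 2) (Fin 2) ℝ := Real.cos φ • 1 + Real.sin φ • Jmat

/-- The shape operator `A(t,s)` of the focal submanifold `M₁` (`g = 6`, `(m₁,m₂) = (2,2)`),
given in `2 × 2` blocks: `B₁₁ = √3 cos t I`, `B₁₅ = √3 sin t R(π/2-s)`, `B₅₁ = √3 sin t R(s-π/2)`,
`B₅₅ = -√3 cos t I`, `B₂₂ = (1/√3) cos t I`, `B₂₄ = (1/√3) sin t R(π/2-s)`,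
`B₄₂ = (1/√3) sin t R(s-π/2)`, `B₄₄ = -(1/√3) cos t I`, other blocks zero. -/
noncomputable def A (t s : ℝ) : Matrix (Fin 10) (Fin 10) ℝ :=
  ofBlocks !![(Real.sqrt 3 * Real.cos t) • 1, 0, 0, 0, (Real.sqrt 3 * Real.sin t) • R (π/2 - s);
              0, ((1 / Real.sqrt 3) * Real.cos t) • 1, 0,
                ((1 / Real.sqrt 3) * Real.sin t) • R (π/2 - s), 0;
              0, 0, 0, 0, 0;
              0, ((1 / Real.sqrt 3) * Real.sin t) • R (s - π/2), 0,
                (-((1 / Real.sqrt 3) * Real.cos t)) • 1, 0;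
              (Real.sqrt 3 * Real.sin t) • R (s - π/2), 0, 0, 0,
                (-(Real.sqrt 3 * Real.cos t)) • 1]

/-- The index pair `(b, k)` of coordinate `k` of block `b`, for the ordering
`e₁, e₁̄, …, e₅, e₅̄` of the basis of `ℝ¹⁰` that underlies `ofBlocks`. -/
def blockIndex : Fin 10 ≃ Fin 5 × Fin 2 := (finProdFinEquiv (m := 5) (n := 2)).symm

/-- The vector of `ℝ¹⁰` with prescribed blocks in `ℝ²`, the counterpart of `ofBlocks` for
vectors. -/
def ofBlockVec (v : Fin 5 → Fin 2 → ℝ) : Fin 10 → ℝ := Function.uncurry v ∘ blockIndex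

lemma uncurry_dotProduct_uncurry {I K α : Type*} [Fintype I] [Fintype K]
    [NonUnitalNonAssocSemiring α] (v w : I → K → α) :
    Function.uncurry v ⬝ᵥ Function.uncurry w = ∑ i, v i ⬝ᵥ w i :=
  Fintype.sum_prod_type _

lemma comp_mulVec_uncurry {I J K L α : Type*} [Fintype J] [Fintype L]
    [NonUnitalNonAssocSemiring α] (M : Matrix I J (Matrix K L α)) (v : J → L → α) :
    comp I J K L α M *ᵥ Function.uncurry v =
      Function.uncurry fun i => ∑ j, M i j *ᵥ v j := by
  ext ⟨i, k⟩
  simp only [Function.uncurry_apply_pair, Finset.sum_apply]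
  exact Fintype.sum_prod_type _

lemma ofBlockVec_dotProduct_ofBlockVec (v w : Fin 5 → Fin 2 → ℝ) :
    ofBlockVec v ⬝ᵥ ofBlockVec w = ∑ b, v b ⬝ᵥ w b := by
  rw [ofBlockVec, ofBlockVec, comp_equiv_dotProduct_comp_equiv, uncurry_dotProduct_uncurry]

lemma smul_ofBlockVec (c : ℝ) (v : Fin 5 → Fin 2 → ℝ) :
    c • ofBlockVec v = ofBlockVec (c • v) := rfl

lemma ofBlockVec_eq (v : Fin 5 → Fin 2 → ℝ) :
    ofBlockVec v = ![v 0 0, v 0 1, v 1 0, v 1 1, v 2 0, v 2 1, v 3 0, v 3 1, v 4 0, v 4 1] := by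
  ext i
  fin_cases i <;> rfl

lemma ofBlocks_eq_submatrix_comp (M : Matrix (Fin 5) (Fin 5) (Matrix (Fin 2) (Fin 2) ℝ)) :
    ofBlocks M = (comp _ _ _ _ ℝ M).submatrix blockIndex blockIndex := rfl

lemma ofBlocks_mulVec_ofBlockVec (M : Matrix (Fin 5) (Fin 5) (Matrix (Fin 2) (Fin 2) ℝ))
    (v : Fin 5 → Fin 2 → ℝ) :
    ofBlocks M *ᵥ ofBlockVec v = ofBlockVec fun b => ∑ c, M b c *ᵥ v c := by
  rw [ofBlocks_eq_submatrix_comp, submatrix_mulVec_equiv, ofBlockVec, Function.comp_assoc,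
    Equiv.self_comp_symm, Function.comp_id, comp_mulVec_uncurry, ofBlockVec]

lemma ofBlocks_mulVec_ofBlockVec_outer
    (M : Matrix (Fin 5) (Fin 5) (Matrix (Fin 2) (Fin 2) ℝ)) (u w : Fin 2 → ℝ) :
    ofBlocks M *ᵥ ofBlockVec ![u, 0, 0, 0, w] =
      ofBlockVec fun b => M b 0 *ᵥ u + M b 4 *ᵥ w := by
  simp only [ofBlocks_mulVec_ofBlockVec, Fin.sum_univ_five, cons_val, mulVec_zero, add_zero]

lemma R_eq (φ : ℝ) : R φ = !![cos φ, -sin φ; sin φ, cos φ] := by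
  ext i j
  fin_cases i <;> fin_cases j <;> simp [R, Jmat]

lemma R_mulVec (φ x y : ℝ) :
    R φ *ᵥ ![x, y] = ![cos φ * x - sin φ * y, sin φ * x + cos φ * y] := by
  ext k
  fin_cases k <;> simp [R_eq, sub_eq_add_neg, mul_comm]

lemma transpose_R (φ : ℝ) : (R φ)ᵀ = R (-φ) := by
  ext i j
  fin_cases i <;> fin_cases j <;> simp [R_eq]

lemma R_neg_mul_R (φ : ℝ) : R (-φ) * R φ = 1 := by
  ext i j
  fin_cases i <;> fin_cases j <;> simp [R_eq, Matrix.mul_apply, ← sq, mul_comm]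

lemma R_neg_mulVec_R_mulVec (φ : ℝ) (v : Fin 2 → ℝ) : R (-φ) *ᵥ (R φ *ᵥ v) = v := by
  rw [mulVec_mulVec, R_neg_mul_R, one_mulVec]

lemma R_mulVec_dotProduct_R_mulVec (φ : ℝ) (v w : Fin 2 → ℝ) :
    (R φ *ᵥ v) ⬝ᵥ (R φ *ᵥ w) = v ⬝ᵥ w := by
  rw [dotProduct_comm, ← dotProduct_transpose_mulVec, transpose_R, R_neg_mulVec_R_mulVec,
    dotProduct_comm]

lemma exists_half_angle_sin_pos {t : ℝ} (ht : cos t ≠ 1) :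
    ∃ θ, 0 < sin θ ∧ cos (2 * θ) = cos t ∧ sin (2 * θ) = sin t := by
  have htwo : 2 * (t / 2) = t := mul_div_cancel₀ t two_ne_zero
  have hsin : sin (t / 2) ≠ 0 := by
    intro h
    apply ht
    rw [← htwo, cos_two_mul_eq_one_sub, h]
    norm_num
  rcases hsin.lt_or_gt with hneg | hpos
  · have hshift : 2 * (t / 2 + π) = t + 2 * π := by rw [mul_add, htwo]
    refine ⟨t / 2 + π, ?_, ?_, ?_⟩
    · rwa [sin_add_pi, neg_pos]
    · rw [hshift, cos_add_two_pi]
    · rw [hshift, sin_add_two_pi]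
  · exact ⟨t / 2, hpos, by rw [htwo], by rw [htwo]⟩

lemma sqrt_half_one_sub_cos_two_mul {θ : ℝ} (hθ : 0 ≤ sin θ) :
    √((1 - cos (2 * θ)) / 2) = sin θ := by
  rw [cos_two_mul_eq_one_sub, sub_sub_cancel, mul_div_cancel_left₀ _ two_ne_zero, sqrt_sq hθ]

lemma sqrt_two_mul_one_sub_cos_two_mul {θ : ℝ} (hθ : 0 ≤ sin θ) :
    √(2 * (1 - cos (2 * θ))) = 2 * sin θ := by
  rw [cos_two_mul_eq_one_sub, sub_sub_cancel, ← sqrt_sq (mul_nonneg zero_le_two hθ)]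
  ring_nf

lemma cos_two_mul_mul_cos_add (θ : ℝ) :
    cos (2 * θ) * cos θ + sin (2 * θ) * sin θ = cos θ := by
  rw [← cos_sub]
  ring_nf

lemma sin_two_mul_mul_cos_sub (θ : ℝ) :
    sin (2 * θ) * cos θ - cos (2 * θ) * sin θ = sin θ := by
  rw [← sin_sub]
  ring_nf

lemma A_mulVec_ofBlockVec (t s : ℝ) (u w : Fin 2 → ℝ) :
    A t s *ᵥ ofBlockVec ![u, 0, 0, 0, w] =
      √3 • ofBlockVec ![cos t • u + sin t • R (π / 2 - s) *ᵥ w, 0, 0, 0,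
        sin t • R (s - π / 2) *ᵥ u - cos t • w] := by
  rw [A, ofBlocks_mulVec_ofBlockVec_outer, smul_ofBlockVec]
  congr 1
  funext b
  fin_cases b <;>
    simp only [Pi.smul_apply, of_apply, Fin.reduceFinMk, cons_val, zero_mulVec, neg_mulVec,
      smul_mulVec, one_mulVec, smul_add, smul_zero, add_zero, mul_smul, neg_smul,
      sub_eq_add_neg, smul_neg]

/-- The vector of the eigenspace `E(√3)` of `A(2θ, s)` with parameter `v ∈ ℝ²`. When `sin θ > 0`,
the two standard basis vectors `v` give `ε₁` and `ε₁̄` at `t = 2θ`. -/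
noncomputable def eigenvec (θ s : ℝ) (v : Fin 2 → ℝ) : Fin 10 → ℝ :=
  ofBlockVec ![cos θ • R (π / 2 - s) *ᵥ v, 0, 0, 0, sin θ • v]

lemma eigenvec_eq (θ s x y : ℝ) :
    eigenvec θ s ![x, y] =
      ![cos θ * (sin s * x - cos s * y), cos θ * (cos s * x + sin s * y), 0, 0, 0, 0, 0, 0,
        sin θ * x, sin θ * y] := by
  rw [eigenvec, R_mulVec, cos_pi_div_two_sub, sin_pi_div_two_sub, ofBlockVec_eq]
  rfl

lemma eigenvec_dotProduct_eigenvec (θ s : ℝ) (v w : Fin 2 → ℝ) :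
    eigenvec θ s v ⬝ᵥ eigenvec θ s w = v ⬝ᵥ w := by
  rw [eigenvec, eigenvec, ofBlockVec_dotProduct_ofBlockVec]
  simp only [Fin.sum_univ_five, cons_val, smul_dotProduct, dotProduct_smul, smul_eq_mul,
    R_mulVec_dotProduct_R_mulVec, dotProduct_zero, add_zero]
  linear_combination (v ⬝ᵥ w) * cos_sq_add_sin_sq θ

lemma A_mulVec_eigenvec (θ s : ℝ) (v : Fin 2 → ℝ) :
    A (2 * θ) s *ᵥ eigenvec θ s v = √3 • eigenvec θ s v := by
  have hR : R (s - π / 2) *ᵥ (R (π / 2 - s) *ᵥ v) = v := by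
    rw [← neg_sub, R_neg_mulVec_R_mulVec]
  rw [eigenvec, A_mulVec_ofBlockVec, mulVec_smul, mulVec_smul, hR]
  simp only [smul_smul, ← add_smul, ← sub_smul, cos_two_mul_mul_cos_add, sin_two_mul_mul_cos_sub]

theorem stmt12_general (t s : ℝ) (ht : cos t ≠ 1) :
    let d : ℝ := Real.sqrt (2 * (1 - Real.cos t))
    let ε1 : Fin 10 → ℝ :=
      ![Real.sin t * Real.sin s / d, Real.sin t * Real.cos s / d, 0, 0, 0, 0, 0, 0,
        Real.sqrt ((1 - Real.cos t) / 2), 0]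
    let ε1b : Fin 10 → ℝ :=
      ![-(Real.sin t * Real.cos s) / d, Real.sin t * Real.sin s / d, 0, 0, 0, 0, 0, 0,
        0, Real.sqrt ((1 - Real.cos t) / 2)]
    ε1 ⬝ᵥ ε1 = 1 ∧ ε1b ⬝ᵥ ε1b = 1 ∧ ε1 ⬝ᵥ ε1b = 0 ∧
    (A t s).mulVec ε1 = Real.sqrt 3 • ε1 ∧ (A t s).mulVec ε1b = Real.sqrt 3 • ε1b := by
  intro d ε1 ε1b
  obtain ⟨θ, hθ, hcos, hsin⟩ := exists_half_angle_sin_pos ht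
  have hA : A t s = A (2 * θ) s := by simp only [A, hcos, hsin]
  have hq : √((1 - cos t) / 2) = sin θ := hcos ▸ sqrt_half_one_sub_cos_two_mul hθ.le
  have hd : d = 2 * sin θ := by simp only [d, ← hcos, sqrt_two_mul_one_sub_cos_two_mul hθ.le]
  have hdiv (x : ℝ) : sin t * x / d = cos θ * x := by
    rw [hd, ← hsin, sin_two_mul]
    field_simp
  have hε1 : ε1 = eigenvec θ s ![1, 0] := by
    simp [ε1, eigenvec_eq, hdiv, hq]
  have hε1b : ε1b = eigenvec θ s ![0, 1] := by
    simp [ε1b, eigenvec_eq, hdiv, hq, neg_div]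
  rw [hε1, hε1b, hA]
  simp [eigenvec_dotProduct_eigenvec, A_mulVec_eigenvec]

/-- For `0 < t < π`, the vectors
`ε₁ = (sin t sin s)/√(2(1-cos t)) e₁ + (sin t cos s)/√(2(1-cos t)) e₁̄ + √((1-cos t)/2) e₅` and
`ε₁̄ = -(sin t cos s)/√(2(1-cos t)) e₁ + (sin t sin s)/√(2(1-cos t)) e₁̄ + √((1-cos t)/2) e₅̄`
(in the standard basis `e₁, e₁̄, e₂, e₂̄, …, e₅, e₅̄` of `ℝ¹⁰`) are orthonormal eigenvectors of
`A(t,s)` for the eigenvalue `√3`. -/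
theorem stmt12 (t s : ℝ) (ht0 : 0 < t) (htpi : t < π) :
    let d : ℝ := Real.sqrt (2 * (1 - Real.cos t))
    let ε1 : Fin 10 → ℝ :=
      ![Real.sin t * Real.sin s / d, Real.sin t * Real.cos s / d, 0, 0, 0, 0, 0, 0,
        Real.sqrt ((1 - Real.cos t) / 2), 0]
    let ε1b : Fin 10 → ℝ :=
      ![-(Real.sin t * Real.cos s) / d, Real.sin t * Real.sin s / d, 0, 0, 0, 0, 0, 0,
        0, Real.sqrt ((1 - Real.cos t) / 2)]
    ε1 ⬝ᵥ ε1 = 1 ∧ ε1b ⬝ᵥ ε1b = 1 ∧ ε1 ⬝ᵥ ε1b = 0 ∧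
    (A t s).mulVec ε1 = Real.sqrt 3 • ε1 ∧ (A t s).mulVec ε1b = Real.sqrt 3 • ε1b := by
  exact stmt12_general t s fun hcos =>
    ht0.ne' ((cos_eq_one_iff_of_lt_of_lt (by linarith) (by linarith)).mp hcos)
end

section
/- Let $a, b$ be quaternions with $|a|=|b|=1$. Then $a j \bar a = b j \bar b$ and $a k \bar a = b k \bar b$ hold simultaneously if and only if $b = a$ or $b = -a$. Hence the map $\sigma(a) = \frac{1}{\sqrt{2}}(a j \bar a, a k \bar a)$ from the unit quaternions to $M_1$ is exactly two-to-one, i.e., a double covering onto its image. -/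
open Quaternion

/-- The quaternion unit `j`. -/
noncomputable def qj : ℍ[ℝ] := ⟨0, 0, 1, 0⟩

/-- The quaternion unit `k`. -/
noncomputable def qk : ℍ[ℝ] := ⟨0, 0, 0, 1⟩

/-!
If `a` and `b` conjugate `p ≠ 0` to the same quaternion, comparing norms gives `|a| = |b|`, and
then `c = star a * b` commutes with `p`. If this holds for two quaternions `p` and `q` that do not
commute, then `c` is real: both `⁅p, q⁆` and `c * ⁅p, q⁆ = ⁅p, c * q⁆` are commutators, so their
real parts vanish and conjugation changes their sign, which turns `c * ⁅p, q⁆ = ⁅p, q⁆ * c` into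
`⁅p, q⁆ * star c = ⁅p, q⁆ * c`. Finally `star (a - b) * (a + b) = 0`, because its diagonal terms
cancel by `|a| = |b|` and its cross terms by `star c = c`.
-/

theorem eq_or_eq_neg_of_isSelfAdjoint_star_mul {A : Type*} [NonUnitalRing A] [NoZeroDivisors A]
    [StarRing A] {a b : A} (hab : star a * a = star b * b) (hc : IsSelfAdjoint (star a * b)) :
    b = a ∨ b = -a := by
  have hc' : star b * a = star a * b := by simpa only [star_mul, star_star] using hc.star_eq
  have hmul : star (a - b) * (a + b) = 0 := by
    rw [star_sub, sub_mul, mul_add, mul_add, hab, hc']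
    abel
  rcases mul_eq_zero.mp hmul with h | h
  · exact .inl (sub_eq_zero.mp (star_eq_zero.mp h)).symm
  · exact .inr (eq_neg_of_add_eq_zero_right h)

theorem mul_lie_eq_of_commute {A : Type*} [NonUnitalRing A] {c p : A} (h : Commute c p) (q : A) :
    c * ⁅p, q⁆ = ⁅p, c * q⁆ := by
  simp only [Ring.lie_def, mul_sub, ← mul_assoc, h.eq]

section CommRing

variable {R : Type*} [CommRing R]

theorem star_lie_eq_neg_lie (p q : ℍ[R]) : star ⁅p, q⁆ = -⁅p, q⁆ := by
  have re_lie : (⁅p, q⁆).re = 0 := by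
    rw [Ring.lie_def, Quaternion.re_sub, Quaternion.re_mul, Quaternion.re_mul]
    ring
  rw [Quaternion.star_eq_two_re_sub, re_lie, mul_zero, Quaternion.coe_zero, zero_sub]

theorem lie_mul_star_eq_lie_mul {c p q : ℍ[R]} (hp : Commute c p) (hq : Commute c q) :
    ⁅p, q⁆ * star c = ⁅p, q⁆ * c := by
  have hlie : Commute c ⁅p, q⁆ := (hp.mul_right hq).sub_right (hq.mul_right hp)
  have hstar : star (c * ⁅p, q⁆) = -(c * ⁅p, q⁆) := by
    rw [mul_lie_eq_of_commute hp, star_lie_eq_neg_lie]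
  rwa [star_mul, star_lie_eq_neg_lie, neg_mul, neg_inj, hlie.eq] at hstar

variable [NoZeroDivisors ℍ[R]]

theorem isSelfAdjoint_of_commute_of_commute {c p q : ℍ[R]} (hpq : ¬Commute p q)
    (hp : Commute c p) (hq : Commute c q) : IsSelfAdjoint c :=
  mul_left_cancel₀ (commute_iff_lie_eq.not.mp hpq) (lie_mul_star_eq_lie_mul hp hq)

theorem commute_star_mul_of_conj_eq {a b p : ℍ[R]} (hab : normSq a = normSq b)
    (h : a * p * star a = b * p * star b) : Commute (star a * b) p := by
  rcases eq_or_ne a 0 with rfl | ha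
  · simp
  have hN : ((normSq a : R) : ℍ[R]) ≠ 0 := by
    rw [← Quaternion.star_mul_self]
    exact mul_ne_zero (star_ne_zero.mpr ha) ha
  refine mul_left_cancel₀ hN ?_
  calc ((normSq a : R) : ℍ[R]) * (star a * b * p)
      = star a * b * p * (star b * b) := by
        rw [Quaternion.coe_commutes, Quaternion.star_mul_self, hab]
    _ = star a * (b * p * star b) * b := by simp only [mul_assoc]
    _ = star a * a * (p * (star a * b)) := by rw [← h]; simp only [mul_assoc]
    _ = normSq a * (p * (star a * b)) := by rw [Quaternion.star_mul_self]

end CommRing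

section Ordered

variable {R : Type*} [CommRing R] [LinearOrder R] [IsStrictOrderedRing R]

theorem normSq_eq_of_conj_eq {a b p : ℍ[R]} (hp : p ≠ 0)
    (h : a * p * star a = b * p * star b) : normSq a = normSq b := by
  have normSq_conj (x : ℍ[R]) : normSq (x * p * star x) = normSq x ^ 2 * normSq p := by
    rw [map_mul, map_mul, Quaternion.normSq_star]
    ring
  have hsq : normSq a ^ 2 = normSq b ^ 2 := by
    refine mul_right_cancel₀ (Quaternion.normSq_ne_zero.mpr hp) ?_
    rw [← normSq_conj, ← normSq_conj, h]
  exact (sq_eq_sq₀ Quaternion.normSq_nonneg Quaternion.normSq_nonneg).mp hsq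

theorem stmt16_general {p q : ℍ[R]} (hpq : ¬Commute p q) (a b : ℍ[R]) :
    (a * p * star a = b * p * star b ∧ a * q * star a = b * q * star b) ↔
      (b = a ∨ b = -a) := by
  constructor
  · rintro ⟨hp, hq⟩
    have p_ne_zero : p ≠ 0 := fun hp₀ => hpq (hp₀ ▸ Commute.zero_left q)
    have hab : normSq a = normSq b := normSq_eq_of_conj_eq p_ne_zero hp
    have hc : IsSelfAdjoint (star a * b) := isSelfAdjoint_of_commute_of_commute hpq
      (commute_star_mul_of_conj_eq hab hp) (commute_star_mul_of_conj_eq hab hq)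
    refine eq_or_eq_neg_of_isSelfAdjoint_star_mul ?_ hc
    rw [Quaternion.star_mul_self, Quaternion.star_mul_self, hab]
  · rintro (rfl | rfl) <;> simp

end Ordered

theorem not_commute_qj_qk : ¬Commute qj qk := by
  intro h
  have hI : (qj * qk).imI = (qk * qj).imI := congrArg QuaternionAlgebra.imI h.eq
  rw [Quaternion.imI_mul, Quaternion.imI_mul] at hI
  norm_num [qj, qk] at hI

/-- For unit quaternions `a, b`, one has `a j ā = b j b̄` and `a k ā = b k b̄` simultaneously
iff `b = a` or `b = -a`; hence `σ(a) = (1/√2)(a j ā, a k ā)` is exactly two-to-one, a double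
covering onto its image. -/
theorem stmt16 (a b : ℍ[ℝ]) (ha : ‖a‖ = 1) (hb : ‖b‖ = 1) :
    (a * qj * star a = b * qj * star b ∧ a * qk * star a = b * qk * star b) ↔
      (b = a ∨ b = -a) :=
  stmt16_general not_commute_qj_qk a b
end

section
/- Define $\sigma:\mathbb{H}\to\mathbb{H}\times\mathbb{H}$ by $\sigma(a) = \frac{1}{\sqrt{2}}(a j \bar a,\ a k \bar a)$. For any quaternion $a$ with $|a|=1$, the (Fréchet) derivative of $\sigma$ at $a$ satisfies $\sigma'(a)(ai) = (\sqrt{2}\,a k \bar a,\ -\sqrt{2}\,a j \bar a)$, $\sigma'(a)(aj) = (0,\ \sqrt{2}\,a i \bar a)$, and $\sigma'(a)(ak) = (-\sqrt{2}\,a i \bar a,\ 0)$. Consequently these three image vectors are mutually orthogonal in $\mathbb{H}\times\mathbb{H}$ with squared norms $4$, $2$, $2$ respectively. -/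
/-!
On a tangent vector `a p` with `p` imaginary, the derivative of `a ↦ a q ā` is `a [p, q] ā`, so the
three image vectors come from the commutators `[i, j] = 2k`, `[j, k] = 2i`, `[k, i] = 2j`. Since
`q ↦ a q ā` scales inner products by `|a|⁴`, their Gram matrix reduces to the orthonormality of
`i, j, k`.
-/

open Quaternion RealInnerProductSpace

/-- The quaternion unit `i`. -/
noncomputable def qi : ℍ[ℝ] := ⟨0, 1, 0, 0⟩

/-- The map `σ(a) = (1/√2)(a j ā, a k ā) : ℍ → ℍ × ℍ`. -/
noncomputable def σFKM : ℍ[ℝ] → ℍ[ℝ] × ℍ[ℝ] :=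
  fun a => ((1 / Real.sqrt 2) • (a * qj * star a), (1 / Real.sqrt 2) • (a * qk * star a))

lemma one_div_smul_mul_smul_mul {K A : Type*} [Field K] [Ring A] [Algebra K A] (r c : K)
    (a q b : A) : (1 / r) • (a * (c • q) * b) = (c / r) • (a * q * b) := by
  rw [mul_smul_comm, smul_mul_assoc, smul_smul, one_div_mul_eq_div]

section ConjugationByStar

variable {𝕜 A : Type*} [NontriviallyNormedField 𝕜] [StarRing 𝕜] [TrivialStar 𝕜]
  [NormedRing A] [NormedAlgebra 𝕜 A] [StarRing A] [StarModule 𝕜 A] [ContinuousStar A]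

lemma hasFDerivAt_mul_mul_star (q a : A) :
    HasFDerivAt (fun x ↦ x * q * star x)
      ((ContinuousLinearMap.mul 𝕜 A).flip (q * star a) +
        ContinuousLinearMap.mul 𝕜 A (a * q) ∘L (starL' 𝕜 : A ≃L[𝕜] A)) a := by
  refine (((hasFDerivAt_id a).mul_const' q).mul' (hasFDerivAt_id (𝕜 := 𝕜) a).star).congr_fderiv ?_
  ext h
  simp [mul_assoc, add_comm]

lemma fderiv_mul_mul_star_apply_mul (q a : A) {p : A} (hp : p ∈ skewAdjoint A) :
    fderiv 𝕜 (fun x ↦ x * q * star x) a (a * p) = a * ⁅p, q⁆ * star a := by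
  rw [(hasFDerivAt_mul_mul_star q a).fderiv]
  calc a * p * (q * star a) + a * q * star (a * p)
      = a * p * (q * star a) + a * q * (-p * star a) := by
        rw [star_mul, skewAdjoint.mem_iff.mp hp]
    _ = a * ⁅p, q⁆ * star a := by rw [Ring.lie_def]; noncomm_ring

end ConjugationByStar

instance instStarModuleQuaternion {R : Type*} [CommRing R] [StarRing R] [TrivialStar R] :
    StarModule R ℍ[R] where
  star_smul r p := by rw [Quaternion.star_smul, star_trivial r]

lemma re_mul_comm {R : Type*} [CommRing R] (p q : ℍ[R]) : (p * q).re = (q * p).re := by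
  simp only [Quaternion.re_mul]
  ring

lemma inner_mul_left_mul_left (a p q : ℍ) : ⟪a * p, a * q⟫ = ‖a‖ ^ 2 * ⟪p, q⟫ := by
  calc (a * p * star (a * q)).re
      = (a * (p * star q * star a)).re := by simp only [star_mul, mul_assoc]
    _ = (p * star q * (star a * a)).re := by rw [re_mul_comm, mul_assoc]
    _ = ‖a‖ ^ 2 * (p * star q).re := by
        rw [star_mul_self, mul_coe_eq_smul, re_smul, normSq_eq_norm_mul_self, sq, smul_eq_mul]

lemma inner_mul_right_mul_right (a p q : ℍ) : ⟪p * a, q * a⟫ = ‖a‖ ^ 2 * ⟪p, q⟫ := by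
  calc (p * a * star (q * a)).re
      = (p * (a * star a) * star q).re := by simp only [star_mul, mul_assoc]
    _ = ‖a‖ ^ 2 * (p * star q).re := by
        rw [self_mul_star, mul_coe_eq_smul, smul_mul_assoc, re_smul, normSq_eq_norm_mul_self, sq,
          smul_eq_mul]

lemma inner_mul_mul_star (a p q : ℍ) :
    ⟪a * p * star a, a * q * star a⟫ = ‖a‖ ^ 4 * ⟪p, q⟫ := by
  rw [inner_mul_right_mul_right, inner_mul_left_mul_left, norm_star]
  ring

lemma mem_skewAdjoint_iff_re_eq_zero {R : Type*} [CommRing R] [NoZeroDivisors R] [CharZero R]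
    {p : ℍ[R]} : p ∈ skewAdjoint ℍ[R] ↔ p.re = 0 := by
  rw [skewAdjoint.mem_iff, star_eq_neg]

lemma lie_eq_two_smul_cross {R : Type*} [CommRing R] (p q : ℍ[R]) :
    ⁅p, q⁆ = (2 : R) • (⟨0, p.imJ * q.imK - p.imK * q.imJ, p.imK * q.imI - p.imI * q.imK,
      p.imI * q.imJ - p.imJ * q.imI⟩ : ℍ[R]) := by
  rw [Ring.lie_def]
  ext <;> simp <;> ring

lemma lie_qi_qj : ⁅qi, qj⁆ = (2 : ℝ) • qk := by
  rw [lie_eq_two_smul_cross]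
  ext <;> simp only [re_smul, imI_smul, imJ_smul, imK_smul] <;> simp [qi, qj, qk]

lemma lie_qi_qk : ⁅qi, qk⁆ = (-2 : ℝ) • qj := by
  rw [lie_eq_two_smul_cross]
  ext <;> simp only [re_smul, imI_smul, imJ_smul, imK_smul] <;> simp [qi, qk, qj]

lemma lie_qj_qk : ⁅qj, qk⁆ = (2 : ℝ) • qi := by
  rw [lie_eq_two_smul_cross]
  ext <;> simp only [re_smul, imI_smul, imJ_smul, imK_smul] <;> simp [qj, qk, qi]

lemma lie_qk_qj : ⁅qk, qj⁆ = (-2 : ℝ) • qi := by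
  rw [lie_eq_two_smul_cross]
  ext <;> simp only [re_smul, imI_smul, imJ_smul, imK_smul] <;> simp [qk, qj, qi]

lemma orthonormal_qi_qj_qk : Orthonormal ℝ ![qi, qj, qk] := by
  rw [orthonormal_iff_ite]
  intro m n
  rw [Quaternion.inner_def, Quaternion.re_mul, re_star, imI_star, imJ_star, imK_star]
  fin_cases m <;> fin_cases n <;> simp [qi, qj, qk]

lemma fderiv_σFKM_apply_mul (a : ℍ) {p : ℍ} (hp : p ∈ skewAdjoint ℍ) :
    fderiv ℝ σFKM a (a * p) =
      ((1 / √2) • (a * ⁅p, qj⁆ * star a), (1 / √2) • (a * ⁅p, qk⁆ * star a)) := by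
  have diff (q : ℍ) : DifferentiableAt ℝ (fun x : ℍ ↦ x * q * star x) a :=
    (hasFDerivAt_mul_mul_star q a).differentiableAt
  unfold σFKM
  rw [((diff qj).fun_const_smul _).fderiv_prodMk ((diff qk).fun_const_smul _),
    fderiv_fun_const_smul (diff qj), fderiv_fun_const_smul (diff qk)]
  simp only [ContinuousLinearMap.prod_apply, smul_apply, fderiv_mul_mul_star_apply_mul _ _ hp]

lemma fderiv_σFKM_apply_mul_qi (a : ℍ) :
    fderiv ℝ σFKM a (a * qi) = (√2 • (a * qk * star a), -(√2 • (a * qj * star a))) := by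
  rw [fderiv_σFKM_apply_mul a (mem_skewAdjoint_iff_re_eq_zero.2 rfl), lie_qi_qj, lie_qi_qk,
    one_div_smul_mul_smul_mul, one_div_smul_mul_smul_mul, neg_div, Real.div_sqrt,
    neg_smul]

lemma fderiv_σFKM_apply_mul_qj (a : ℍ) :
    fderiv ℝ σFKM a (a * qj) = (0, √2 • (a * qi * star a)) := by
  rw [fderiv_σFKM_apply_mul a (mem_skewAdjoint_iff_re_eq_zero.2 rfl), (Commute.refl qj).lie_eq,
    lie_qj_qk, one_div_smul_mul_smul_mul, Real.div_sqrt, mul_zero, zero_mul, smul_zero]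

lemma fderiv_σFKM_apply_mul_qk (a : ℍ) :
    fderiv ℝ σFKM a (a * qk) = (-(√2 • (a * qi * star a)), 0) := by
  rw [fderiv_σFKM_apply_mul a (mem_skewAdjoint_iff_re_eq_zero.2 rfl), lie_qk_qj,
    (Commute.refl qk).lie_eq, one_div_smul_mul_smul_mul, neg_div, Real.div_sqrt,
    neg_smul, mul_zero, zero_mul, smul_zero]

theorem stmt17_general (a : ℍ[ℝ]) :
    let v1 : ℍ[ℝ] × ℍ[ℝ] :=
      (Real.sqrt 2 • (a * qk * star a), -(Real.sqrt 2 • (a * qj * star a)))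
    let v2 : ℍ[ℝ] × ℍ[ℝ] := (0, Real.sqrt 2 • (a * qi * star a))
    let v3 : ℍ[ℝ] × ℍ[ℝ] := (-(Real.sqrt 2 • (a * qi * star a)), 0)
    fderiv ℝ σFKM a (a * qi) = v1 ∧
    fderiv ℝ σFKM a (a * qj) = v2 ∧
    fderiv ℝ σFKM a (a * qk) = v3 ∧
    ⟪v1.1, v2.1⟫ + ⟪v1.2, v2.2⟫ = 0 ∧
    ⟪v1.1, v3.1⟫ + ⟪v1.2, v3.2⟫ = 0 ∧
    ⟪v2.1, v3.1⟫ + ⟪v2.2, v3.2⟫ = 0 ∧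
    ⟪v1.1, v1.1⟫ + ⟪v1.2, v1.2⟫ = 4 * ‖a‖ ^ 4 ∧
    ⟪v2.1, v2.1⟫ + ⟪v2.2, v2.2⟫ = 2 * ‖a‖ ^ 4 ∧
    ⟪v3.1, v3.1⟫ + ⟪v3.2, v3.2⟫ = 2 * ‖a‖ ^ 4 := by
  have h := orthonormal_iff_ite.1 orthonormal_qi_qj_qk
  have hii : ⟪qi, qi⟫ = 1 := h 0 0
  have hjj : ⟪qj, qj⟫ = 1 := h 1 1
  have hkk : ⟪qk, qk⟫ = 1 := h 2 2
  have hji : ⟪qj, qi⟫ = 0 := h 1 0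
  have hki : ⟪qk, qi⟫ = 0 := h 2 0
  have inner_image (p q : ℍ) :
      ⟪√2 • (a * p * star a), √2 • (a * q * star a)⟫ = 2 * ‖a‖ ^ 4 * ⟪p, q⟫ := by
    rw [real_inner_smul_left, real_inner_smul_right, inner_mul_mul_star, ← mul_assoc,
      Real.mul_self_sqrt zero_le_two, mul_assoc]
  refine ⟨fderiv_σFKM_apply_mul_qi a, fderiv_σFKM_apply_mul_qj a, fderiv_σFKM_apply_mul_qk a,
    ?_, ?_, ?_, ?_, ?_, ?_⟩ <;>
  · simp only [inner_neg_left, inner_neg_right, inner_zero_left, inner_zero_right, inner_image,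
      hii, hjj, hkk, hji, hki]
    ring

/-- For a unit quaternion `a`, the Fréchet derivative of `σ` at `a` sends
`ai ↦ (√2 a k ā, -√2 a j ā)`, `aj ↦ (0, √2 a i ā)`, `ak ↦ (-√2 a i ā, 0)`; these three image
vectors are mutually orthogonal in `ℍ × ℍ` (inner product `⟨p,q⟩ = Re(p q̄)` componentwise)
with squared norms `4`, `2`, `2` respectively. -/
theorem stmt17 (a : ℍ[ℝ]) (ha : ‖a‖ = 1) :
    let v1 : ℍ[ℝ] × ℍ[ℝ] :=
      (Real.sqrt 2 • (a * qk * star a), -(Real.sqrt 2 • (a * qj * star a)))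
    let v2 : ℍ[ℝ] × ℍ[ℝ] := (0, Real.sqrt 2 • (a * qi * star a))
    let v3 : ℍ[ℝ] × ℍ[ℝ] := (-(Real.sqrt 2 • (a * qi * star a)), 0)
    fderiv ℝ σFKM a (a * qi) = v1 ∧
    fderiv ℝ σFKM a (a * qj) = v2 ∧
    fderiv ℝ σFKM a (a * qk) = v3 ∧
    ⟪v1.1, v2.1⟫ + ⟪v1.2, v2.2⟫ = 0 ∧
    ⟪v1.1, v3.1⟫ + ⟪v1.2, v3.2⟫ = 0 ∧
    ⟪v2.1, v3.1⟫ + ⟪v2.2, v3.2⟫ = 0 ∧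
    ⟪v1.1, v1.1⟫ + ⟪v1.2, v1.2⟫ = 4 ∧
    ⟪v2.1, v2.1⟫ + ⟪v2.2, v2.2⟫ = 2 ∧
    ⟪v3.1, v3.1⟫ + ⟪v3.2, v3.2⟫ = 2 := by
  simpa only [ha, one_pow, mul_one] using stmt17_general a
end

section
/- One has $\int_{0}^{\pi/4}\Big(\frac{3}{10}\Big(\frac{1}{(\cos\theta+\sin\theta)^2}+\frac{1}{(\cos\theta-\sin\theta)^2}\Big)+\frac{2}{5\cos^2\theta}\Big)\cos^3(2\theta)\,\cos^4\theta\,\sin^4\theta\,d\theta = \frac{17}{2400}-\frac{\pi}{1280}$. -/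
open Real MeasureTheory

/-!
Since `(cos θ + sin θ) (cos θ - sin θ) = cos 2θ` and `sin² 2θ = 2 (1 - cos 2θ) cos² θ`, the weights
`1 / (cos θ + sin θ)² + 1 / (cos θ - sin θ)²` and `1 / cos² θ` cancel against two factors of
`cos 2θ` and of `sin 2θ` respectively. The integrand is therefore a polynomial in `sin x` and
`cos x`, where `x = 2θ`, and what is left are the integrals of `sinᵐ x cosⁿ x` over `[0, π/2]`,
which obey a two-step recurrence in `n`.
-/

section Trigonometry

theorem one_div_cos_add_sin_sq_add_one_div_cos_sub_sin_sq {θ : ℝ} (hθ : cos (2 * θ) ≠ 0) :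
    1 / (cos θ + sin θ) ^ 2 + 1 / (cos θ - sin θ) ^ 2 = 2 / cos (2 * θ) ^ 2 := by
  have hfactor : cos (2 * θ) = (cos θ + sin θ) * (cos θ - sin θ) := by
    rw [cos_two_mul']
    ring
  obtain ⟨hadd, hsub⟩ := mul_ne_zero_iff.mp (hfactor ▸ hθ)
  rw [hfactor]
  field_simp
  linear_combination 2 * cos_sq_add_sin_sq θ

-- The exponent starts at three so that both sides vanish where `1 / 0` occurs on the left.
theorem one_div_sq_add_one_div_sq_mul_cos_two_mul_pow (θ : ℝ) (m : ℕ) :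
    (1 / (cos θ + sin θ) ^ 2 + 1 / (cos θ - sin θ) ^ 2) * cos (2 * θ) ^ (m + 3) =
      2 * cos (2 * θ) ^ (m + 1) := by
  by_cases hθ : cos (2 * θ) = 0
  · simp [hθ]
  · rw [one_div_cos_add_sin_sq_add_one_div_cos_sub_sin_sq hθ]
    field_simp
    ring

-- As above, both sides vanish where `cos θ = 0`.
theorem one_div_cos_sq_mul_sin_two_mul_pow (θ : ℝ) (n : ℕ) :
    1 / cos θ ^ 2 * sin (2 * θ) ^ (n + 3) = 2 * (1 - cos (2 * θ)) * sin (2 * θ) ^ (n + 1) := by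
  by_cases hθ : cos θ = 0
  · simp [sin_two_mul, hθ]
  · have hsin : sin (2 * θ) ^ 2 = 2 * (1 - cos (2 * θ)) * cos θ ^ 2 := by
      rw [sin_sq, cos_sq θ]
      ring
    rw [show n + 3 = n + 1 + 2 from rfl, pow_add, hsin]
    field_simp

theorem cos_mul_sin_pow (θ : ℝ) (n : ℕ) : (cos θ * sin θ) ^ n = sin (2 * θ) ^ n / 2 ^ n := by
  rw [← div_pow, sin_two_mul]
  ring

end Trigonometry

section WallisIntegrals

theorem hasDerivAt_sin_pow_mul_cos_pow (m n : ℕ) (x : ℝ) :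
    HasDerivAt (fun x ↦ sin x ^ (m + 1) * cos x ^ (n + 1))
      ((m + n + 2) * (sin x ^ m * cos x ^ (n + 2)) - (n + 1) * (sin x ^ m * cos x ^ n)) x := by
  refine (((hasDerivAt_sin x).fun_pow (m + 1)).fun_mul
    ((hasDerivAt_cos x).fun_pow (n + 1))).congr_deriv ?_
  push_cast
  linear_combination -(n + 1) * sin x ^ m * cos x ^ n * sin_sq_add_cos_sq x

theorem integral_sin_pow_mul_cos_pow_add_two (a b : ℝ) (m n : ℕ) :
    ∫ x in a..b, sin x ^ m * cos x ^ (n + 2) =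
      (sin b ^ (m + 1) * cos b ^ (n + 1) - sin a ^ (m + 1) * cos a ^ (n + 1) +
        (n + 1) * ∫ x in a..b, sin x ^ m * cos x ^ n) / (m + n + 2) := by
  have hint (k : ℕ) : IntervalIntegrable (fun x ↦ sin x ^ m * cos x ^ k) volume a b :=
    Continuous.intervalIntegrable (by fun_prop) a b
  have hftc := intervalIntegral.integral_eq_sub_of_hasDerivAt
    (fun x _ ↦ hasDerivAt_sin_pow_mul_cos_pow m n x)
    (((hint (n + 2)).const_mul _).sub ((hint n).const_mul _))
  rw [intervalIntegral.integral_sub ((hint (n + 2)).const_mul _) ((hint n).const_mul _),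
    intervalIntegral.integral_const_mul, intervalIntegral.integral_const_mul] at hftc
  rw [eq_div_iff (by positivity)]
  linear_combination hftc

theorem integral_sin_pow_mul_cos_pow_add_two_zero_pi_div_two (m n : ℕ) :
    ∫ x in (0 : ℝ)..π / 2, sin x ^ m * cos x ^ (n + 2) =
      (n + 1) / (m + n + 2) * ∫ x in (0 : ℝ)..π / 2, sin x ^ m * cos x ^ n := by
  rw [integral_sin_pow_mul_cos_pow_add_two]
  simp only [cos_pi_div_two, sin_zero, ne_eq, Nat.add_eq_zero_iff, one_ne_zero, and_false,
    not_false_eq_true, zero_pow, mul_zero, zero_mul, sub_zero, zero_add]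
  ring

theorem integral_sin_pow_mul_cos_zero_pi_div_two (m : ℕ) :
    ∫ x in (0 : ℝ)..π / 2, sin x ^ m * cos x = 1 / (m + 1) := by
  simpa using integral_sin_pow_mul_cos_pow_odd (a := 0) (b := π / 2) m 0

theorem integral_sin_sq_mul_cos_pow_three_zero_pi_div_two :
    ∫ x in (0 : ℝ)..π / 2, sin x ^ 2 * cos x ^ 3 = 2 / 15 := by
  rw [integral_sin_pow_mul_cos_pow_add_two_zero_pi_div_two 2 1]
  simp only [pow_one, integral_sin_pow_mul_cos_zero_pi_div_two]
  norm_num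

theorem integral_sin_sq_mul_cos_pow_four_zero_pi_div_two :
    ∫ x in (0 : ℝ)..π / 2, sin x ^ 2 * cos x ^ 4 = π / 32 := by
  rw [integral_sin_pow_mul_cos_pow_add_two_zero_pi_div_two 2 2,
    integral_sin_pow_mul_cos_pow_add_two_zero_pi_div_two 2 0]
  simp only [pow_zero, mul_one, integral_sin_sq, sin_zero, cos_pi_div_two]
  push_cast
  ring

end WallisIntegrals

section WeightedIntegral

variable (p q : ℝ) (m n : ℕ)

theorem weight_mul_cos_pow_mul_sin_pow (θ : ℝ) :
    (p * (1 / (cos θ + sin θ) ^ 2 + 1 / (cos θ - sin θ) ^ 2) + q * (1 / cos θ ^ 2)) *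
        cos (2 * θ) ^ (m + 3) * sin (2 * θ) ^ (n + 3) =
      2 * (p * (sin (2 * θ) ^ (n + 3) * cos (2 * θ) ^ (m + 1)) +
        q * (sin (2 * θ) ^ (n + 1) * cos (2 * θ) ^ (m + 3) -
          sin (2 * θ) ^ (n + 1) * cos (2 * θ) ^ (m + 4))) := by
  linear_combination
    p * sin (2 * θ) ^ (n + 3) * one_div_sq_add_one_div_sq_mul_cos_two_mul_pow θ m +
    q * cos (2 * θ) ^ (m + 3) * one_div_cos_sq_mul_sin_two_mul_pow θ n

theorem integral_weight_mul_cos_pow_mul_sin_pow :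
    ∫ θ in (0 : ℝ)..π / 4,
      (p * (1 / (cos θ + sin θ) ^ 2 + 1 / (cos θ - sin θ) ^ 2) + q * (1 / cos θ ^ 2)) *
        cos (2 * θ) ^ (m + 3) * sin (2 * θ) ^ (n + 3) =
      p * (∫ x in (0 : ℝ)..π / 2, sin x ^ (n + 3) * cos x ^ (m + 1)) +
        q * ((∫ x in (0 : ℝ)..π / 2, sin x ^ (n + 1) * cos x ^ (m + 3)) -
          ∫ x in (0 : ℝ)..π / 2, sin x ^ (n + 1) * cos x ^ (m + 4)) := by
  have hint (k l : ℕ) : IntervalIntegrable (fun x ↦ sin x ^ k * cos x ^ l) volume 0 (π / 2) :=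
    Continuous.intervalIntegrable (by fun_prop) _ _
  have hsubst := intervalIntegral.mul_integral_comp_mul_left (a := 0) (b := π / 4)
    (f := fun x ↦ p * (sin x ^ (n + 3) * cos x ^ (m + 1)) +
      q * (sin x ^ (n + 1) * cos x ^ (m + 3) - sin x ^ (n + 1) * cos x ^ (m + 4))) (c := 2)
  simp only [weight_mul_cos_pow_mul_sin_pow]
  rw [intervalIntegral.integral_const_mul, hsubst, mul_zero, show 2 * (π / 4) = π / 2 by ring,
    intervalIntegral.integral_add ((hint _ _).const_mul p)
      (((hint _ _).sub (hint _ _)).const_mul q),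
    intervalIntegral.integral_const_mul, intervalIntegral.integral_const_mul,
    intervalIntegral.integral_sub (hint _ _) (hint _ _)]

end WeightedIntegral

/-- `∫_0^{π/4} ((3/10)(1/(cosθ+sinθ)² + 1/(cosθ-sinθ)²) + 2/(5cos²θ)) cos³(2θ) cos⁴θ sin⁴θ dθ
    = 17/2400 - π/1280`. -/
theorem stmt19 :
    (∫ θ in (0:ℝ)..(π/4),
      ((3/10) * (1 / (cos θ + sin θ)^2 + 1 / (cos θ - sin θ)^2) + 2 / (5 * (cos θ)^2))
        * (cos (2*θ))^3 * (cos θ)^4 * (sin θ)^4)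
    = 17/2400 - π/1280 := by
  have hintegrand (θ : ℝ) :
      ((3/10) * (1 / (cos θ + sin θ)^2 + 1 / (cos θ - sin θ)^2) + 2 / (5 * (cos θ)^2))
          * (cos (2*θ))^3 * (cos θ)^4 * (sin θ)^4 =
        1/16 * ((3/10 * (1 / (cos θ + sin θ)^2 + 1 / (cos θ - sin θ)^2)
          + 2/5 * (1 / cos θ ^ 2)) * cos (2*θ) ^ (0 + 3) * sin (2*θ) ^ (1 + 3)) := by
    rw [mul_assoc _ (cos θ ^ 4), ← mul_pow, cos_mul_sin_pow]
    ring
  simp only [hintegrand]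
  rw [intervalIntegral.integral_const_mul, integral_weight_mul_cos_pow_mul_sin_pow]
  simp only [zero_add, Nat.reduceAdd, pow_one, integral_sin_pow_mul_cos_zero_pi_div_two,
    integral_sin_sq_mul_cos_pow_three_zero_pi_div_two,
    integral_sin_sq_mul_cos_pow_four_zero_pi_div_two]
  push_cast
  ring
end
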